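/- (Kopylov) Let k ≥ 5 and let G be a 2-connected simple graph on n ≥ k vertices. If e(G) > max{ h(n, k, ⌊k/2⌋), h(n, k, 2) }, then G contains a cycle of length at least k. -/

import Mathlib

open SimpleGraph

/-- The number of edges of a simple graph. -/
noncomputable def edgeCount {V : Type*} (G : SimpleGraph V) : ℕ := G.edgeSet.ncard

/-- `H` occurs as a subgraph of `G` (there is an injective map preserving adjacency). -/
def ContainsCopy {V W : Type*} (G : SimpleGraph V) (H : SimpleGraph W) : Prop :=
  ∃ f : W → V, Function.Injective f ∧ ∀ a b : W, H.Adj a b → G.Adj (f a) (f b)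

/-- The Turán number `ex(n, H)`: the maximum number of edges of an `H`-free
simple graph on `n` vertices. -/
noncomputable def exNum (n : ℕ) {W : Type*} (H : SimpleGraph W) : ℕ :=
  sSup {m | ∃ G : SimpleGraph (Fin n), ¬ ContainsCopy G H ∧ edgeCount G = m}

/-- `h(n,k,a) = C(k-a,2) + a(n-k+a)`. -/
def hFun (n k a : ℕ) : ℕ := (k - a).choose 2 + a * (n - k + a)

/-- `c(n,m,ℓ) = C(m-1,2) + t·C(ℓ-1,2) + C(r,2)` where `n = (m-1) + t(ℓ-1) + r`,
`0 ≤ r < ℓ-1`. -/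
def cFun (n m l : ℕ) : ℕ :=
  (m - 1).choose 2 + ((n - (m - 1)) / (l - 1)) * ((l - 1).choose 2)
    + ((n - (m - 1)) % (l - 1)).choose 2

/-- A graph is 2-connected if it has at least 3 vertices and removing any
single vertex leaves a connected graph. -/
def TwoConnected {V : Type*} [Fintype V] (G : SimpleGraph V) : Prop :=
  3 ≤ Fintype.card V ∧ ∀ v : V, (G.induce ({v}ᶜ : Set V)).Connected

/-- The circumference of a graph: the length of a longest cycle
(`0` if there is no cycle). -/
noncomputable def circumference {V : Type*} (G : SimpleGraph V) : ℕ :=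
  sSup {m | ∃ (v : V) (c : G.Walk v v), c.IsCycle ∧ c.length = m}

/-- The number of neighbours (in `G`) of `x` lying on the walk `p`. -/
noncomputable def degOn {V : Type*} (G : SimpleGraph V) {a b : V} (p : G.Walk a b) (x : V) : ℕ :=
  {v | v ∈ p.support ∧ G.Adj x v}.ncard

/-- The graph obtained from `G` by adding the edge `uv`. -/
def addEdge {V : Type*} (G : SimpleGraph V) (u v : V) : SimpleGraph V :=
  G ⊔ SimpleGraph.fromEdgeSet {s(u, v)}

/-- The minimum degree of a graph (with classical decidability). -/
noncomputable def minDeg {V : Type*} [Fintype V] (G : SimpleGraph V) : ℕ :=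
  @SimpleGraph.minDegree _ G _ (Classical.decRel _)

section Kopylov

variable {V : Type*} {G : SimpleGraph V}

/-- `l` lists the vertices of a path of `G` from `u` to `v`. -/
structure IsListPath (G : SimpleGraph V) (u v : V) (l : List V) : Prop where
  chain : l.IsChain G.Adj
  nodup : l.Nodup
  head : l.head? = some u
  last : l.getLast? = some v

namespace IsListPath

variable {u v w x : V} {l l₁ l₂ : List V}

theorem singleton (u : V) : IsListPath G u u [u] := by
  constructor <;> simp

theorem mem_head (h : IsListPath G u v l) : u ∈ l := List.mem_of_mem_head? h.head

theorem mem_last (h : IsListPath G u v l) : v ∈ l := List.mem_of_mem_getLast? h.last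

theorem append (h₁ : IsListPath G u v l₁) (h₂ : IsListPath G w x l₂) (hadj : G.Adj v w)
    (hd : ∀ z ∈ l₁, z ∉ l₂) : IsListPath G u x (l₁ ++ l₂) where
  chain := List.isChain_append.2 ⟨h₁.chain, h₂.chain, by
    rw [h₁.last, h₂.head]; simpa using hadj⟩
  nodup := List.nodup_append'.2 ⟨h₁.nodup, h₂.nodup, hd⟩
  head := by simp [h₁.head]
  last := by simp [h₂.last]

theorem reverse (h : IsListPath G u v l) : IsListPath G v u l.reverse where
  chain := List.isChain_reverse.2 (h.chain.imp fun _ _ h => h.symm)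
  nodup := List.nodup_reverse.2 h.nodup
  head := by simp [h.last]
  last := by simp [h.head]

theorem concat (h : IsListPath G u v l) (hadj : G.Adj v w) (hw : w ∉ l) :
    IsListPath G u w (l ++ [w]) :=
  h.append (singleton w) hadj (by grind)

theorem cons (h : IsListPath G u v l) (hadj : G.Adj w u) (hw : w ∉ l) :
    IsListPath G w v (w :: l) :=
  (singleton w).append h hadj (by grind)

theorem left_of_split {l₁ l₂ : List V} (h : IsListPath G u v (l₁ ++ w :: l₂)) :
    IsListPath G u w (l₁ ++ [w]) where
  chain := (List.isChain_split.1 h.chain).1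
  nodup := h.nodup.sublist (by simp)
  head := by have := h.head; cases l₁ <;> simp_all
  last := by simp

theorem right_of_split {l₁ l₂ : List V} (h : IsListPath G u v (l₁ ++ w :: l₂)) :
    IsListPath G w v (w :: l₂) where
  chain := (List.isChain_split.1 h.chain).2
  nodup := h.nodup.sublist (by simp)
  head := by simp
  last := by have := h.last; simp_all

theorem exists_cons (h : IsListPath G u v l) : ∃ l', l = u :: l' := by
  have := h.head
  cases l <;> simp_all

/-- Removing the first vertex of a path between distinct vertices. -/
theorem exists_tail (h : IsListPath G u v l) (huv : u ≠ v) :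
    ∃ w l', G.Adj u w ∧ IsListPath G w v l' ∧ u ∉ l' ∧ ∀ z, z ∈ l ↔ z = u ∨ z ∈ l' := by
  obtain ⟨l', rfl⟩ := h.exists_cons
  cases l' with
  | nil => have := h.last; simp_all
  | cons w l' =>
    refine ⟨w, w :: l', ?_, right_of_split (l₁ := [u]) h, ?_, by simp⟩
    · exact (List.isChain_cons_cons.1 h.chain).1
    · exact (List.nodup_cons.1 h.nodup).1

/-- Two paths meeting only in a common end can be concatenated. -/
theorem exists_join (h₁ : IsListPath G u v l₁) (h₂ : IsListPath G v w l₂)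
    (hd : ∀ z ∈ l₁, z ∈ l₂ → z = v) :
    ∃ l, IsListPath G u w l ∧ ∀ z, z ∈ l ↔ z ∈ l₁ ∨ z ∈ l₂ := by
  by_cases hvw : v = w
  · subst hvw
    obtain ⟨l₂', rfl⟩ := h₂.exists_cons
    refine ⟨l₁, h₁, fun z => ?_⟩
    have h₃ : l₂' = [] := by
      have := h₂.last
      have h4 := h₂.nodup
      by_contra hne
      rw [List.getLast?_cons_of_ne_nil hne] at this
      exact (List.nodup_cons.1 h4).1 (List.mem_of_mem_getLast? this)
    have := h₁.mem_last
    grind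
  · obtain ⟨x, l', hadj, hl', hnot, hmem⟩ := h₂.exists_tail hvw
    refine ⟨l₁ ++ l', h₁.append hl' hadj ?_, ?_⟩
    · grind
    · have := h₁.mem_last
      grind

end IsListPath

/-- `G` has a cycle of length at least `k`, given by the list of its vertices. -/
def HasLongCycle (G : SimpleGraph V) (k : ℕ) : Prop :=
  ∃ u v l, IsListPath G u v l ∧ G.Adj v u ∧ k ≤ l.length

theorem HasLongCycle.exists_isCycle {k : ℕ} (hk : 3 ≤ k) (h : HasLongCycle G k) :
    ∃ (v : V) (c : G.Walk v v), c.IsCycle ∧ k ≤ c.length := by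
  obtain ⟨u, v, l, hl, hadj, hlen⟩ := h
  have hne : l ≠ [] := by rintro rfl; simp at hlen; omega
  let p := SimpleGraph.Walk.ofSupport l hne hl.chain
  have hp : p.support = l := SimpleGraph.Walk.support_ofSupport hne hl.chain
  have hu : l.head hne = u := by
    have := hl.head; rw [List.head?_eq_some_head hne] at this; simpa using this
  have hv : l.getLast hne = v := by
    have := hl.last; rw [List.getLast?_eq_some_getLast hne] at this; simpa using this
  have hadj' : G.Adj (l.getLast hne) (l.head hne) := by rwa [hu, hv]
  have hplen : p.length + 1 = l.length := by
    rw [← SimpleGraph.Walk.length_support]; exact congrArg List.length hp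
  refine ⟨_, SimpleGraph.Walk.cons hadj' p, ?_, ?_⟩
  · rw [SimpleGraph.Walk.isCycle_iff_isPath_tail_and_le_length]
    refine ⟨?_, ?_⟩
    · rw [SimpleGraph.Walk.isPath_def, SimpleGraph.Walk.support_tail_of_not_nil _ (by simp)]
      simpa [hp] using hl.nodup
    · simp; omega
  · simp; omega

theorem card_le_length_of_subset {l : List V} {S : Finset V} (h : ∀ z ∈ S, z ∈ l) :
    S.card ≤ l.length := by
  classical
  calc S.card ≤ l.toFinset.card := Finset.card_le_card fun z hz => by simpa using h z hz
    _ ≤ l.length := List.toFinset_card_le l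

/-- No vertex separates two others. -/
def NoCutVertex (G : SimpleGraph V) : Prop :=
  ∀ c s t : V, s ≠ c → t ≠ c → ∃ l, IsListPath G s t l ∧ c ∉ l

theorem TwoConnected.noCutVertex [Fintype V] (h : TwoConnected G) : NoCutVertex G := by
  intro c s t hs ht
  classical
  obtain ⟨p⟩ := (h.2 c).preconnected ⟨s, hs⟩ ⟨t, ht⟩
  have hp := p.toPath.2
  set q := p.toPath.1
  refine ⟨q.support.map Subtype.val, ⟨?_, ?_, ?_, ?_⟩, ?_⟩
  · rw [List.isChain_map]
    exact q.isChain_adj_support.imp fun a b hab => hab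
  · exact (SimpleGraph.Walk.isPath_def _ |>.1 hp).map Subtype.val_injective
  · rw [List.head?_map, List.head?_eq_some_head q.support_ne_nil]; simp
  · rw [List.getLast?_map, List.getLast?_eq_some_getLast q.support_ne_nil]; simp
  · simp

theorem NoCutVertex.mono {H : SimpleGraph V} (h : NoCutVertex G) (hle : G ≤ H) :
    NoCutVertex H := by
  intro c s t hs ht
  obtain ⟨l, hl, hc⟩ := h c s t hs ht
  exact ⟨l, ⟨hl.chain.imp fun _ _ h => hle h, hl.nodup, hl.head, hl.last⟩, hc⟩

/-- A shortest path between two sets avoiding a vertex meets the sets only in its ends. -/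
theorem NoCutVertex.exists_path_between (h : NoCutVertex G) (S T : Set V) {c s t : V}
    (hs : s ∈ S) (ht : t ∈ T) (hsc : s ≠ c) (htc : t ≠ c) :
    ∃ d e l, d ∈ S ∧ e ∈ T ∧ IsListPath G d e l ∧ c ∉ l ∧
      (∀ z ∈ l, z ∈ S → z = d) ∧ ∀ z ∈ l, z ∈ T → z = e := by
  classical
  have hex : ∃ N, ∃ d e l, d ∈ S ∧ e ∈ T ∧ IsListPath G d e l ∧ c ∉ l ∧ l.length = N := by
    obtain ⟨l, hl, hc⟩ := h c s t hsc htc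
    exact ⟨_, s, t, l, hs, ht, hl, hc, rfl⟩
  obtain ⟨d, e, l, hd, he, hl, hc, hlen⟩ := Nat.find_spec hex
  have hmin : ∀ d' e' l', d' ∈ S → e' ∈ T → IsListPath G d' e' l' → c ∉ l' →
      l.length ≤ l'.length := fun d' e' l' h1 h2 h3 h4 =>
    hlen ▸ Nat.find_min' hex ⟨d', e', l', h1, h2, h3, h4, rfl⟩
  refine ⟨d, e, l, hd, he, hl, hc, fun z hz hzS => ?_, fun z hz hzT => ?_⟩
  · obtain ⟨l₁, l₂, rfl⟩ := List.append_of_mem hz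
    have h1 := hmin z e _ hzS he hl.right_of_split (by grind)
    have h2 : l₁ = [] := by
      rw [← List.length_eq_zero_iff]
      simp only [List.length_append, List.length_cons] at h1
      omega
    subst h2
    simpa using hl.head
  · obtain ⟨l₁, l₂, rfl⟩ := List.append_of_mem hz
    have h1 := hmin d z _ hd hzT hl.left_of_split (by grind)
    have h2 : l₂ = [] := by
      rw [← List.length_eq_zero_iff]
      simp only [List.length_append, List.length_cons, List.length_nil] at h1
      omega
    subst h2
    simpa using hl.last

/-- Two disjoint paths from `X` to `Y`, the first one ending in `w`, one of them starting in `a`. -/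
structure IsLinkage (G : SimpleGraph V) (X Y : Set V) (a w : V) (u u' z : V) (A B : List V) :
    Prop where
  pathA : IsListPath G u w A
  pathB : IsListPath G u' z B
  disj : ∀ t ∈ A, t ∉ B
  memX : u ∈ X
  memX' : u' ∈ X
  memY : w ∈ Y
  memY' : z ∈ Y
  interAX : ∀ t ∈ A, t ∈ X → t = u
  interBX : ∀ t ∈ B, t ∈ X → t = u'
  interAY : ∀ t ∈ A, t ∈ Y → t = w
  interBY : ∀ t ∈ B, t ∈ Y → t = z
  start : a = u ∨ a = u'

theorem NoCutVertex.exists_isLinkage_step (h : NoCutVertex G) {X Y : Set V} {a w w' t : V}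
    (hXY : ∀ z ∈ X, z ∉ Y) (hw : w ∉ Y) (hw' : w' ∈ Y) (hadj : G.Adj w w') (ht : t ∈ Y)
    (htw : t ≠ w') (hL : ∃ u u' z A B, IsLinkage G X (insert w Y) a w u u' z A B) :
    ∃ u u' z A B, IsLinkage G X Y a w' u u' z A B := by
  obtain ⟨u, u', z, A, B, L⟩ := hL
  have hwA := L.pathA.mem_last
  have hzB := L.pathB.mem_last
  have hzY : z ∈ Y := by
    rcases L.memY' with h1 | h1
    · exact absurd (h1 ▸ hzB) (L.disj w hwA)
    · exact h1
  have hAY : ∀ t ∈ A, t ∉ Y := fun t htA htY => hw (L.interAY t htA (Or.inr htY) ▸ htY)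
  have hBY : ∀ t ∈ B, t ∈ Y → t = z := fun t htB htY => L.interBY t htB (Or.inr htY)
  have hw'X : w' ∉ X := fun h => hXY _ h hw'
  by_cases hz : z = w'
  · subst hz
    have hpA := L.pathA.concat hadj (fun h => hAY _ h hw')
    obtain ⟨d, e, l, hd, he, hl, hc, hS, hT⟩ := h.exists_path_between
      {t | t ∈ A ∨ t ∈ B ∨ t ∈ X} Y (c := z) (s := w) (t := t) (Or.inl hwA) ht
      (by rintro rfl; exact hw hw') htw
    have hdz : d ≠ z := fun h => hc (h ▸ hl.mem_head)
    have hdY : d ∉ Y := by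
      rcases hd with h1 | h1 | h1
      · exact hAY d h1
      · exact fun h2 => hdz (hBY d h1 h2)
      · exact hXY d h1
    have hde : d ≠ e := fun h => hdY (h ▸ he)
    have hX := L.memX
    have hX' := L.memX'
    have hAX := L.interAX
    have hBX := L.interBX
    have hdisj := L.disj
    have hstart := L.start
    have hSA : ∀ x ∈ l, x ∈ A → x = d := fun x h1 h2 => hS x h1 (Or.inl h2)
    have hSB : ∀ x ∈ l, x ∈ B → x = d := fun x h1 h2 => hS x h1 (Or.inr (Or.inl h2))
    have hSX : ∀ x ∈ l, x ∈ X → x = d := fun x h1 h2 => hS x h1 (Or.inr (Or.inr h2))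
    by_cases hdA : d ∈ A
    · obtain ⟨A₁, A₂, rfl⟩ := List.append_of_mem hdA
      obtain ⟨D, hD, hDm⟩ := L.pathA.left_of_split.exists_join hl (by grind)
      exact ⟨u', u, e, B, D, L.pathB, hD, by grind, hX', hX, hw', he, by grind, by grind,
        by grind, by grind, by grind⟩
    by_cases hdB : d ∈ B
    · obtain ⟨B₁, B₂, rfl⟩ := List.append_of_mem hdB
      have hz2 : z ∈ B₂ := by
        have := L.pathB.right_of_split.mem_last
        grind
      have hnd := L.pathB.nodup
      obtain ⟨D, hD, hDm⟩ := L.pathB.left_of_split.exists_join hl (by grind)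
      have hzD : z ∉ D := by grind
      exact ⟨u, u', e, A ++ [z], D, hpA, hD, by grind, hX, hX', hw', he, by grind, by grind,
        by grind, by grind, by grind⟩
    have hdX : d ∈ X := by grind
    rcases hstart with hs | hs
    · exact ⟨u, d, e, A ++ [z], l, hpA, hl, by grind, hX, hdX, hw', he, by grind, by grind,
        by grind, by grind, by grind⟩
    · exact ⟨u', d, e, B, l, L.pathB, hl, by grind, hX', hdX, hw', he, by grind, by grind,
        by grind, by grind, by grind⟩
  · refine ⟨u, u', z, A ++ [w'], B, L.pathA.concat hadj (fun h => hAY _ h hw'), L.pathB, ?_,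
      L.memX, L.memX', hw', hzY, ?_, L.interBX, ?_, hBY, L.start⟩
    · have := L.disj
      grind
    · have := L.interAX
      grind
    · grind

/-- The vertices `v 0, …, v (m - 1)` form a path of `G`. -/
structure IsIndexedPath (G : SimpleGraph V) (v : ℕ → V) (m : ℕ) : Prop where
  inj : ∀ i < m, ∀ j < m, v i = v j → i = j
  adj : ∀ i, i + 1 < m → G.Adj (v i) (v (i + 1))

namespace IsIndexedPath

variable {v : ℕ → V} {m : ℕ}

theorem reverse (h : IsIndexedPath G v m) : IsIndexedPath G (fun i => v (m - 1 - i)) m where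
  inj i hi j hj hij := by
    have := h.inj (m - 1 - i) (by omega) (m - 1 - j) (by omega) hij
    omega
  adj i hi := by
    have := (h.adj (m - 1 - (i + 1)) (by omega)).symm
    rwa [show m - 1 - (i + 1) + 1 = m - 1 - i by omega] at this

theorem exists_segment (h : IsIndexedPath G v m) {i j : ℕ} (hij : i ≤ j) (hj : j < m) :
    ∃ l, IsListPath G (v i) (v j) l ∧ ∀ z, z ∈ l ↔ ∃ t, i ≤ t ∧ t ≤ j ∧ v t = z := by
  induction j, hij using Nat.le_induction with
  | base =>
    refine ⟨[v i], IsListPath.singleton _, fun z => ?_⟩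
    constructor
    · intro hz
      exact ⟨i, le_rfl, le_rfl, by simpa [eq_comm] using hz⟩
    · rintro ⟨t, h1, h2, rfl⟩
      obtain rfl := le_antisymm h1 h2
      simp
  | succ j hij ih =>
    obtain ⟨l, hl, hmem⟩ := ih (by omega)
    refine ⟨l ++ [v (j + 1)], hl.concat (h.adj j hj) ?_, fun z => ?_⟩
    · rw [hmem]
      rintro ⟨t, h1, h2, h3⟩
      have := h.inj t (by omega) (j + 1) hj h3
      omega
    · rw [List.mem_append, hmem, List.mem_singleton]
      constructor
      · rintro (⟨t, h1, h2, rfl⟩ | rfl)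
        · exact ⟨t, h1, by omega, rfl⟩
        · exact ⟨j + 1, by omega, le_rfl, rfl⟩
      · rintro ⟨t, h1, h2, rfl⟩
        rcases h2.lt_or_eq with h3 | rfl
        · exact Or.inl ⟨t, h1, by omega, rfl⟩
        · exact Or.inr rfl

/-- A path from `v p` to `v a` inside `v 0, …, v a` through `v 0` and its neighbours there. -/
theorem exists_detour (h : IsIndexedPath G v m) {p a : ℕ} (hp : p < a) (ha : a < m)
    (hadj : G.Adj (v 0) (v a)) :
    ∃ l, IsListPath G (v p) (v a) l ∧ (∀ z ∈ l, ∃ t ≤ a, v t = z) ∧ v 0 ∈ l ∧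
      ∀ t ≤ a, G.Adj (v 0) (v t) → v t ∈ l := by
  classical
  have hex : ∃ i, p < i ∧ G.Adj (v 0) (v i) := ⟨a, hp, hadj⟩
  obtain ⟨hpi, hiadj⟩ := Nat.find_spec hex
  have hmin : ∀ t, p < t → G.Adj (v 0) (v t) → Nat.find hex ≤ t :=
    fun t h1 h2 => Nat.find_min' hex ⟨h1, h2⟩
  have hia := hmin a hp hadj
  generalize Nat.find hex = i at *
  obtain ⟨l₁, hl₁, hm₁⟩ := h.exists_segment (Nat.zero_le p) (by omega)
  obtain ⟨l₂, hl₂, hm₂⟩ := h.exists_segment hia ha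
  refine ⟨l₁.reverse ++ l₂, hl₁.reverse.append hl₂ hiadj ?_, ?_, ?_, ?_⟩
  · intro z hz hz2
    rw [List.mem_reverse, hm₁] at hz
    rw [hm₂] at hz2
    obtain ⟨t, h1, h2, rfl⟩ := hz
    obtain ⟨s, h3, h4, h5⟩ := hz2
    have := h.inj s (by omega) t (by omega) h5
    omega
  · intro z hz
    rw [List.mem_append, List.mem_reverse, hm₁, hm₂] at hz
    rcases hz with ⟨t, h1, h2, rfl⟩ | ⟨t, h1, h2, rfl⟩
    · exact ⟨t, by omega, rfl⟩
    · exact ⟨t, h2, rfl⟩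
  · rw [List.mem_append, List.mem_reverse, hm₁]
    exact Or.inl ⟨0, le_rfl, Nat.zero_le _, rfl⟩
  · intro t hta htadj
    rw [List.mem_append, List.mem_reverse, hm₁, hm₂]
    rcases le_or_gt t p with h1 | h1
    · exact Or.inl ⟨t, Nat.zero_le _, h1, rfl⟩
    · exact Or.inr ⟨t, hmin t h1 htadj, hta, rfl⟩

/-- The mirror image of `exists_detour`. -/
theorem exists_detour_right (h : IsIndexedPath G v m) {b q : ℕ} (hq : b < q) (hqm : q < m)
    (hadj : G.Adj (v (m - 1)) (v b)) :
    ∃ l, IsListPath G (v b) (v q) l ∧ (∀ z ∈ l, ∃ t, b ≤ t ∧ t < m ∧ v t = z) ∧ v (m - 1) ∈ l ∧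
      ∀ t, b ≤ t → t < m → G.Adj (v (m - 1)) (v t) → v t ∈ l := by
  have e1 : m - 1 - (m - 1 - q) = q := by omega
  have e2 : m - 1 - (m - 1 - b) = b := by omega
  obtain ⟨l, hl, h1, h2, h3⟩ := h.reverse.exists_detour (p := m - 1 - q) (a := m - 1 - b)
    (by omega) (by omega) (by simpa [e2] using hadj)
  simp only [e1, e2, Nat.sub_zero] at hl h1 h2 h3
  refine ⟨l.reverse, hl.reverse, ?_, by simpa using h2, ?_⟩
  · intro z hz
    obtain ⟨t, ht, hz⟩ := h1 z (by simpa using hz)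
    exact ⟨m - 1 - t, by omega, by omega, hz⟩
  · intro t hbt htm hadj
    have e3 : m - 1 - (m - 1 - t) = t := by omega
    have := h3 (m - 1 - t) (by omega) (by rwa [e3])
    rw [e3] at this
    simpa using this

theorem exists_isLinkage (h : IsIndexedPath G v m) (hG : NoCutVertex G) {a b : ℕ} (ha : 1 ≤ a)
    (hab : a ≤ b) (hb : b + 1 < m) :
    ∃ u u' z A B, IsLinkage G {t | ∃ i ≤ a, v i = t} {t | ∃ i, b ≤ i ∧ i < m ∧ v i = t}
      (v a) (v b) u u' z A B := by
  induction b, hab using Nat.le_induction with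
  | base =>
    have hne : ∀ i < m, i ≠ a → v i ≠ v a := fun i hi hia heq => hia (h.inj i hi a (by omega) heq)
    obtain ⟨d, e, l, ⟨i, hia, rfl⟩, ⟨j, hj, hjm, rfl⟩, hl, hc, hX, hY⟩ := hG.exists_path_between
      {t | ∃ i ≤ a, v i = t} {t | ∃ i, a ≤ i ∧ i < m ∧ v i = t} (c := v a) (s := v 0)
      (t := v (a + 1)) ⟨0, Nat.zero_le _, rfl⟩ ⟨a + 1, by omega, hb, rfl⟩
      (hne _ (by omega) (by omega)) (hne _ (by omega) (by omega))
    exact ⟨v a, v i, v j, [v a], l, IsListPath.singleton _, hl, by simpa using hc,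
      ⟨a, le_rfl, rfl⟩, ⟨i, hia, rfl⟩, ⟨a, le_rfl, by omega, rfl⟩, ⟨j, hj, hjm, rfl⟩,
      by simp, hX, by simp, hY, Or.inl rfl⟩
  | succ c hac ih =>
    refine hG.exists_isLinkage_step (w := v c) (t := v (c + 2)) ?_ ?_ ⟨c + 1, le_rfl, by omega, rfl⟩
      (h.adj c (by omega)) ⟨c + 2, by omega, hb, rfl⟩ ?_ ?_
    · rintro _ ⟨i, hi, rfl⟩ ⟨j, hj, hjm, heq⟩
      have := h.inj j hjm i (by omega) heq
      omega
    · rintro ⟨j, hj, hjm, heq⟩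
      have := h.inj j hjm c (by omega) heq
      omega
    · intro heq
      have := h.inj _ (by omega) _ (by omega) heq
      omega
    · convert ih (by omega) using 13
      ext t
      constructor
      · rintro (rfl | ⟨i, h1, h2, rfl⟩)
        · exact ⟨c, le_rfl, by omega, rfl⟩
        · exact ⟨i, by omega, h2, rfl⟩
      · rintro ⟨i, h1, h2, rfl⟩
        rcases h1.lt_or_eq with h3 | rfl
        · exact Or.inr ⟨i, h3, h2, rfl⟩
        · exact Or.inl rfl

end IsIndexedPath

/-- Two disjoint paths together with two paths connecting their starts and their ends form a
cycle. -/
theorem exists_cycle_of_paths {u u' b q : V} {A B K L : List V} (hA : IsListPath G u b A)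
    (hB : IsListPath G u' q B) (hK : IsListPath G u u' K) (hL : IsListPath G b q L) (huu : u ≠ u')
    (hAB : ∀ z ∈ A, z ∉ B) (hAK : ∀ z ∈ A, z ∈ K → z = u) (hBK : ∀ z ∈ B, z ∈ K → z = u')
    (hAL : ∀ z ∈ A, z ∈ L → z = b) (hBL : ∀ z ∈ B, z ∈ L → z = q)
    (hKL : ∀ z ∈ K, z ∈ L → z = u ∧ z = b) :
    ∃ x y l, IsListPath G x y l ∧ G.Adj y x ∧ ∀ z, z ∈ K ∨ z ∈ L → z ∈ l := by
  have huq : u' ≠ q := by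
    rintro rfl
    exact huu (hKL u' hK.mem_last hL.mem_last).1.symm
  obtain ⟨p', B', hadj, hB', hnot, hmem⟩ := hB.exists_tail huq
  obtain ⟨l₁, hl₁, hm₁⟩ := hK.reverse.exists_join hA (by grind)
  obtain ⟨l₂, hl₂, hm₂⟩ := hl₁.exists_join hL (by grind)
  obtain ⟨l₃, hl₃, hm₃⟩ := hl₂.exists_join hB'.reverse (by grind)
  exact ⟨u', p', l₃, hl₃, hadj.symm, by grind⟩

open scoped Classical in
/-- A path with ends of large degree sum on it yields a long cycle. -/
theorem IsIndexedPath.hasLongCycle {v : ℕ → V} {m k : ℕ} (h : IsIndexedPath G v m)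
    (hG : NoCutVertex G) (hk : 2 ≤ k) (hm : k ≤ m)
    (hdeg : k ≤ ((Finset.range m).filter fun i => G.Adj (v 0) (v i)).card +
      ((Finset.range m).filter fun i => G.Adj (v (m - 1)) (v i)).card) :
    HasLongCycle G k := by
  set I := (Finset.range m).filter fun i => G.Adj (v 0) (v i) with hI
  set J := (Finset.range m).filter fun i => G.Adj (v (m - 1)) (v i) with hJ
  have hI1 : ∀ i, i ∈ I ↔ i < m ∧ G.Adj (v 0) (v i) := by simp [hI]
  have hJ1 : ∀ i, i ∈ J ↔ i < m ∧ G.Adj (v (m - 1)) (v i) := by simp [hJ]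
  have hI0 : ∀ i ∈ I, 1 ≤ i := fun i hi => by
    by_contra h0
    obtain rfl : i = 0 := by omega
    exact G.loopless.irrefl _ ((hI1 0).1 hi).2
  have hJm : ∀ i ∈ J, i + 1 < m := fun i hi => by
    by_contra h0
    obtain ⟨h1, h2⟩ := (hJ1 i).1 hi
    obtain rfl : i = m - 1 := by omega
    exact G.loopless.irrefl _ h2
  have hcard : ∀ S : Finset ℕ, (∀ i ∈ S, i < m) → (S.image v).card = S.card := fun S hS =>
    Finset.card_image_of_injOn fun i hi j hj hij => h.inj i (hS i hi) j (hS j hj) hij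
  by_cases hcross : ∃ d, ∃ j ∈ J, ∃ i ∈ I, j < i ∧ i - j = d
  · obtain ⟨j, hj, i, hi, hji, hd⟩ := Nat.find_spec hcross
    have hmin : ∀ j' ∈ J, ∀ i' ∈ I, j' < i' → i - j ≤ i' - j' := fun j' h1 i' h2 h3 =>
      hd ▸ Nat.find_min' hcross ⟨j', h1, i', h2, h3, rfl⟩
    clear hd
    have him := ((hI1 i).1 hi).1
    obtain ⟨l₁, hl₁, hm₁⟩ := h.exists_segment (Nat.zero_le j) (by omega)
    obtain ⟨l₂, hl₂, hm₂⟩ := h.exists_segment (i := i) (j := m - 1) (by omega) (by omega)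
    refine ⟨v 0, v i, l₁ ++ l₂.reverse, hl₁.append hl₂.reverse ((hJ1 j).1 hj).2.symm ?_,
      ((hI1 i).1 hi).2.symm, ?_⟩
    · intro z hz hz2
      rw [List.mem_reverse, hm₂] at hz2
      rw [hm₁] at hz
      obtain ⟨t, h1, h2, rfl⟩ := hz
      obtain ⟨s, h3, h4, h5⟩ := hz2
      have := h.inj s (by omega) t (by omega) h5
      omega
    · have hlen : ((Finset.range (j + 1) ∪ Finset.Ico i m).image v).card ≤
          (l₁ ++ l₂.reverse).length := by
        apply card_le_length_of_subset
        intro z hz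
        rw [Finset.mem_image] at hz
        obtain ⟨t, ht, rfl⟩ := hz
        rw [List.mem_append, List.mem_reverse, hm₁, hm₂]
        rw [Finset.mem_union, Finset.mem_range, Finset.mem_Ico] at ht
        rcases ht with ht | ht
        · exact Or.inl ⟨t, by omega, by omega, rfl⟩
        · exact Or.inr ⟨t, by omega, by omega, rfl⟩
      rw [hcard _ (by intro t ht; simp at ht; omega), Finset.card_union_of_disjoint (by
        rw [Finset.disjoint_left]; intro t h1 h2; simp at h1 h2; omega)] at hlen
      simp only [Finset.card_range, Nat.card_Ico] at hlen
      by_cases hone : i = j + 1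
      · omega
      have hIc : (I.image fun t => t - 1).card = I.card :=
        Finset.card_image_of_injOn fun s hs t ht hst => by
          have := hI0 s hs
          have := hI0 t ht
          omega
      have hdisj : Disjoint (I.image fun t => t - 1) J := by
        rw [Finset.disjoint_left]
        intro t h1 h2
        obtain ⟨s, hs, rfl⟩ := Finset.mem_image.1 h1
        have := hI0 s hs
        have := hmin _ h2 s hs (by omega)
        omega
      have hsub : (I.image fun t => t - 1) ∪ J ⊆
          Finset.range (j + 1) ∪ Finset.Ico (i - 1) (m - 1) := by
        intro t ht
        rw [Finset.mem_union, Finset.mem_range, Finset.mem_Ico]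
        rcases Finset.mem_union.1 ht with ht | ht
        · obtain ⟨s, hs, rfl⟩ := Finset.mem_image.1 ht
          have h1 := hI0 s hs
          have h2 := ((hI1 s).1 hs).1
          have h3 := hmin j hj s hs
          omega
        · have h1 := hJm t ht
          have h3 := hmin t ht i hi
          omega
      have h1 := Finset.card_le_card hsub
      rw [Finset.card_union_of_disjoint hdisj, hIc] at h1
      have h2 := h1.trans (Finset.card_union_le _ _)
      simp only [Finset.card_range, Nat.card_Ico] at h2
      omega
  · have hnc : ∀ i ∈ I, ∀ j ∈ J, i ≤ j := by
      intro i hi j hj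
      by_contra hlt
      exact hcross ⟨_, j, hj, i, hi, by omega, rfl⟩
    have hIne : I.Nonempty := ⟨1, (hI1 1).2 ⟨by omega, h.adj 0 (by omega)⟩⟩
    have hJne : J.Nonempty := ⟨m - 2, (hJ1 _).2 ⟨by omega, by
      have := (h.adj (m - 2) (by omega)).symm
      rwa [show m - 2 + 1 = m - 1 by omega] at this⟩⟩
    set a := I.max' hIne with ha
    set b := J.min' hJne with hb
    have haI : a ∈ I := I.max'_mem hIne
    have hbJ : b ∈ J := J.min'_mem hJne
    have haub : ∀ i ∈ I, i ≤ a := fun i hi => I.le_max' i hi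
    have hblb : ∀ j ∈ J, b ≤ j := fun j hj => J.min'_le j hj
    have hab := hnc a haI b hbJ
    have ha1 := hI0 a haI
    have hbm := hJm b hbJ
    obtain ⟨u, u', z, A, B, T⟩ := h.exists_isLinkage hG ha1 hab hbm
    obtain ⟨q, hbq, hqm, rfl⟩ := T.memY'
    have hne : v b ≠ v q := fun heq => T.disj _ T.pathA.mem_last (heq ▸ T.pathB.mem_last)
    have hbq' : b < q := lt_of_le_of_ne hbq fun heq => hne (heq ▸ rfl)
    obtain ⟨L, hL, hLY, hLm, hLJ⟩ := h.exists_detour_right hbq' hqm ((hJ1 b).1 hbJ).2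
    have huu : u ≠ u' := fun heq => T.disj u T.pathA.mem_head (heq ▸ T.pathB.mem_head)
    have hK : ∃ K, IsListPath G u u' K ∧ (∀ z ∈ K, ∃ t ≤ a, v t = z) ∧ v 0 ∈ K ∧
        ∀ t ≤ a, G.Adj (v 0) (v t) → v t ∈ K := by
      rcases T.start with rfl | rfl
      · obtain ⟨p, hpa, rfl⟩ := T.memX'
        obtain ⟨K, hK, h1, h2, h3⟩ := h.exists_detour
          (lt_of_le_of_ne hpa fun heq => huu (heq ▸ rfl)) (by omega) ((hI1 a).1 haI).2
        exact ⟨K.reverse, hK.reverse, by simpa using h1, by simpa using h2, by simpa using h3⟩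
      · obtain ⟨p, hpa, rfl⟩ := T.memX
        exact h.exists_detour (lt_of_le_of_ne hpa fun heq => huu (heq ▸ rfl)) (by omega)
          ((hI1 a).1 haI).2
    obtain ⟨K, hK, hKX, hK0, hKI⟩ := hK
    obtain ⟨x, y, l, hl, hadj, hmem⟩ := exists_cycle_of_paths T.pathA T.pathB hK hL huu T.disj
      (fun z hz hzK => T.interAX z hz (hKX z hzK)) (fun z hz hzK => T.interBX z hz (hKX z hzK))
      (fun z hz hzL => T.interAY z hz (hLY z hzL)) (fun z hz hzL => T.interBY z hz (hLY z hzL))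
      (by
        intro z hzK hzL
        obtain ⟨t, hta, rfl⟩ := hKX z hzK
        obtain ⟨s, hbs, hsm, hst⟩ := hLY _ hzL
        have hst := h.inj s hsm t (by omega) hst
        have htb : t = b := by omega
        subst htb
        exact ⟨T.interAX _ T.pathA.mem_last ⟨_, hta, rfl⟩, rfl⟩)
    refine ⟨x, y, l, hl, hadj, ?_⟩
    have hlen : ((insert 0 I ∪ J).image v).card ≤ l.length := by
      apply card_le_length_of_subset
      intro z hz
      obtain ⟨t, ht, rfl⟩ := Finset.mem_image.1 hz
      apply hmem
      rw [Finset.mem_union, Finset.mem_insert] at ht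
      rcases ht with (rfl | ht) | ht
      · exact Or.inl hK0
      · exact Or.inl (hKI t (haub t ht) ((hI1 t).1 ht).2)
      · exact Or.inr (hLJ t (hblb t ht) ((hJ1 t).1 ht).1 ((hJ1 t).1 ht).2)
    rw [hcard _ (by
      intro t ht
      rw [Finset.mem_union, Finset.mem_insert] at ht
      rcases ht with (rfl | ht) | ht
      · omega
      · exact ((hI1 t).1 ht).1
      · exact ((hJ1 t).1 ht).1)] at hlen
    have h0 : 0 ∉ I := fun h0 => by simpa using hI0 0 h0
    have hinter : (insert 0 I ∩ J).card ≤ 1 := by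
      rw [Finset.card_le_one]
      have key : ∀ t ∈ insert 0 I ∩ J, t = a := by
        intro t ht
        rw [Finset.mem_inter, Finset.mem_insert] at ht
        have h1 := hblb t ht.2
        rcases ht.1 with h2 | h2
        · omega
        · have := haub t h2
          omega
      intro s hs t ht
      rw [key s hs, key t ht]
    have := Finset.card_union_add_card_inter (insert 0 I) J
    rw [Finset.card_insert_of_notMem h0] at this
    omega

theorem IsListPath.isIndexedPath {x y : V} {l : List V} (h : IsListPath G x y l) :
    IsIndexedPath G (fun i => l.getD i x) l.length where
  inj i hi j hj hij := by
    simp only [List.getD_eq_getElem _ _ hi, List.getD_eq_getElem _ _ hj] at hij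
    exact (h.nodup.getElem_inj_iff).1 hij
  adj i hi := by
    rw [List.getD_eq_getElem _ _ hi, List.getD_eq_getElem _ _ (by omega)]
    exact List.isChain_iff_getElem.1 h.chain i hi

open scoped Classical in
theorem card_neighbors_le_card_indices {l : List V} (x w : V) :
    (l.toFinset.filter (G.Adj w)).card ≤
      ((Finset.range l.length).filter fun i => G.Adj w (l.getD i x)).card := by
  refine (Finset.card_le_card ?_).trans
    (Finset.card_image_le (s := (Finset.range l.length).filter fun i => G.Adj w (l.getD i x))
      (f := fun i => l.getD i x))
  intro z hz
  rw [Finset.mem_filter, List.mem_toFinset] at hz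
  obtain ⟨i, hi, rfl⟩ := List.getElem_of_mem hz.1
  rw [Finset.mem_image]
  refine ⟨i, ?_, List.getD_eq_getElem _ _ hi⟩
  rw [Finset.mem_filter, Finset.mem_range, List.getD_eq_getElem _ _ hi]
  exact ⟨hi, hz.2⟩

open scoped Classical in
theorem IsListPath.hasLongCycle {x y : V} {l : List V} {k : ℕ} (h : IsListPath G x y l)
    (hG : NoCutVertex G) (hk : 2 ≤ k) (hl : k ≤ l.length)
    (hdeg : k ≤ (l.toFinset.filter (G.Adj x)).card + (l.toFinset.filter (G.Adj y)).card) :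
    HasLongCycle G k := by
  refine h.isIndexedPath.hasLongCycle hG hk hl (hdeg.trans ?_)
  have hx : l.getD 0 x = x := by
    have := h.head
    cases l <;> simp_all
  have hy : l.getD (l.length - 1) x = y := by
    have := h.last
    rw [List.getLast?_eq_getElem?] at this
    rw [List.getD_eq_getElem?_getD, this]
    rfl
  simp only [hx, hy]
  exact Nat.add_le_add (card_neighbors_le_card_indices x x) (card_neighbors_le_card_indices x y)

/-- Any two distinct nonadjacent vertices are joined by a path with at least `k` vertices. -/
def IsCycleSaturated (G : SimpleGraph V) (k : ℕ) : Prop :=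
  ∀ x y, x ≠ y → ¬ G.Adj x y → ∃ l, IsListPath G x y l ∧ k ≤ l.length

theorem IsListPath.of_adj_or {H : SimpleGraph V} {x y : V} {l : List V}
    (h : IsListPath H x y l) (hlen : 3 ≤ l.length)
    (hH : ∀ a b, H.Adj a b → G.Adj a b ∨ a = x ∧ b = y ∨ a = y ∧ b = x) :
    IsListPath G x y l where
  chain := by
    rw [List.isChain_iff_getElem]
    intro i hi
    have hx : l[0] = x := by
      have := h.head
      rw [List.head?_eq_getElem?, List.getElem?_eq_getElem (by omega)] at this
      simpa using this
    have hy : l[l.length - 1] = y := by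
      have := h.last
      rw [List.getLast?_eq_getElem?, List.getElem?_eq_getElem (by omega)] at this
      simpa using this
    rcases hH _ _ (List.isChain_iff_getElem.1 h.chain i hi) with h1 | ⟨h1, h2⟩ | ⟨h1, h2⟩
    · exact h1
    · rw [← hx, h.nodup.getElem_inj_iff] at h1
      rw [← hy, h.nodup.getElem_inj_iff] at h2
      omega
    · rw [← hy, h.nodup.getElem_inj_iff] at h1
      omega
  nodup := h.nodup
  head := h.head
  last := h.last

theorem isCycleSaturated_of_maximal {k : ℕ} (hk : 3 ≤ k)
    (hmax : Maximal (fun H : SimpleGraph V => ¬ HasLongCycle H k) G) :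
    IsCycleSaturated G k := by
  intro x y hxy hadj
  set H := G ⊔ SimpleGraph.edge x y with hH
  have hHadj : ∀ a b, H.Adj a b → G.Adj a b ∨ a = x ∧ b = y ∨ a = y ∧ b = x := by
    intro a b hab
    rw [hH, SimpleGraph.sup_adj, SimpleGraph.edge_adj] at hab
    tauto
  have hlong : HasLongCycle H k := by
    by_contra hno
    have hle := hmax.2 hno le_sup_left
    apply hadj
    apply hle
    rw [hH, SimpleGraph.sup_adj, SimpleGraph.edge_adj]
    tauto
  obtain ⟨u, v, l, hl, hvu, hlen⟩ := hlong
  have hfin : ∀ u v l, IsListPath H u v l → k ≤ l.length → (v = x ∧ u = y ∨ v = y ∧ u = x) →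
      ∃ l, IsListPath G x y l ∧ k ≤ l.length := by
    rintro u v l hl hlen (⟨rfl, rfl⟩ | ⟨rfl, rfl⟩)
    · exact ⟨l.reverse, hl.reverse.of_adj_or (by simp; omega) hHadj, by simpa using hlen⟩
    · exact ⟨l, hl.of_adj_or (by omega) hHadj, hlen⟩
  rcases hHadj v u hvu with hG | hG
  · by_cases hch : l.IsChain G.Adj
    · exact absurd ⟨u, v, l, ⟨hch, hl.nodup, hl.head, hl.last⟩, hG, hlen⟩ hmax.1
    · rw [List.isChain_iff_forall_rel_of_append_cons_cons] at hch
      push Not at hch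
      obtain ⟨c, d, l₁, l₂, rfl, hcd⟩ := hch
      have hcdH : H.Adj c d := (List.isChain_append_cons_cons.1 hl.chain).2.1
      have h1 : IsListPath H u c (l₁ ++ [c]) := hl.left_of_split
      have h2 : IsListPath H d v (d :: l₂) := by
        have : IsListPath H u v ((l₁ ++ [c]) ++ d :: l₂) := by simpa using hl
        exact this.right_of_split
      have hnd := hl.nodup
      have h3 := h2.append h1 hvu (by grind)
      refine hfin d c _ h3 (by simp at hlen ⊢; omega) ?_
      have := hHadj c d hcdH
      tauto
  · exact hfin u v l hl hlen hG

open scoped Classical in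
theorem IsCycleSaturated.adj_of_degrees [Fintype V] {k : ℕ} (hsat : IsCycleSaturated G k)
    (hk : 2 ≤ k) (hG : NoCutVertex G) (hno : ¬ HasLongCycle G k) {S T : Finset V} {c d : ℕ}
    (hS : ∀ x ∈ S, c ≤ (S.filter (G.Adj x)).card) (hT : ∀ y ∈ T, d ≤ (T.filter (G.Adj y)).card)
    (hcd : k ≤ c + d) {x y : V} (hx : x ∈ S) (hy : y ∈ T) (hxy : x ≠ y) : G.Adj x y := by
  by_contra hadj
  let P : ℕ → Prop := fun N => ∃ x ∈ S, ∃ y ∈ T, x ≠ y ∧ ¬ G.Adj x y ∧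
    ∃ l, IsListPath G x y l ∧ k ≤ l.length ∧ l.length = N
  have hbound : ∀ N, P N → N ≤ Fintype.card V := by
    rintro N ⟨x, -, y, -, -, -, l, hl, -, rfl⟩
    exact hl.nodup.length_le_card
  have hPex : ∃ N, P N := by
    obtain ⟨l, hl, hlen⟩ := hsat x y hxy hadj
    exact ⟨_, x, hx, y, hy, hxy, hadj, l, hl, hlen, rfl⟩
  obtain ⟨N₀, hN₀⟩ := hPex
  have hspec := Nat.findGreatest_spec (hbound N₀ hN₀) hN₀
  have hgreat : ∀ N, P N → N ≤ Nat.findGreatest P (Fintype.card V) := fun N hN =>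
    Nat.le_findGreatest (hbound N hN) hN
  obtain ⟨x, hx, y, hy, hxy, hadj, l, hl, hlen, hN⟩ := hspec
  have hmaximal : ∀ x' ∈ S, ∀ y' ∈ T, ∀ l', IsListPath G x' y' l' → x' ≠ y' →
      l'.length = l.length + 1 → False := by
    intro x' hx' y' hy' l' hl' hne hlen'
    by_cases hadj' : G.Adj x' y'
    · exact hno ⟨x', y', l', hl', hadj'.symm, by omega⟩
    · have := hgreat _ ⟨x', hx', y', hy', hne, hadj', l', hl', by omega, rfl⟩
      omega
  apply hno
  refine hl.hasLongCycle hG hk hlen (hcd.trans (Nat.add_le_add ?_ ?_))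
  · refine (hS x hx).trans (Finset.card_le_card ?_)
    intro z hz
    rw [Finset.mem_filter] at hz ⊢
    refine ⟨?_, hz.2⟩
    by_contra hzl
    rw [List.mem_toFinset] at hzl
    exact hmaximal z hz.1 y hy (z :: l) (hl.cons hz.2.symm hzl)
      (fun heq => hzl (heq ▸ hl.mem_last)) rfl
  · refine (hT y hy).trans (Finset.card_le_card ?_)
    intro z hz
    rw [Finset.mem_filter] at hz ⊢
    refine ⟨?_, hz.2⟩
    by_contra hzl
    rw [List.mem_toFinset] at hzl
    exact hmaximal x hx z hz.1 (l ++ [z]) (hl.concat hz.2 hzl)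
      (fun heq => hzl (heq ▸ hl.mem_head)) (by simp)

open scoped Classical in
/-- The largest set of vertices inducing a subgraph of minimum degree greater than `d`. -/
noncomputable def coreSet [Fintype V] (G : SimpleGraph V) (d : ℕ) : Finset V :=
  Finset.univ.filter fun v => ∃ S : Finset V, v ∈ S ∧ ∀ u ∈ S, d < (S.filter (G.Adj u)).card

open scoped Classical in
theorem subset_coreSet [Fintype V] {d : ℕ} {S : Finset V}
    (hS : ∀ u ∈ S, d < (S.filter (G.Adj u)).card) : S ⊆ coreSet G d := fun v hv => by
  rw [coreSet, Finset.mem_filter]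
  exact ⟨Finset.mem_univ _, S, hv, hS⟩

open scoped Classical in
theorem lt_card_filter_coreSet [Fintype V] {d : ℕ} {u : V} (hu : u ∈ coreSet G d) :
    d < ((coreSet G d).filter (G.Adj u)).card := by
  have hu' := hu
  rw [coreSet, Finset.mem_filter] at hu'
  obtain ⟨-, S, huS, hS⟩ := hu'
  exact (hS u huS).trans_le (Finset.card_le_card (Finset.filter_subset_filter _ (subset_coreSet hS)))

theorem coreSet_anti [Fintype V] {c d : ℕ} (hcd : c ≤ d) : coreSet G d ⊆ coreSet G c :=
  subset_coreSet fun _ hu => hcd.trans_lt (lt_card_filter_coreSet hu)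

open scoped Classical in
theorem exists_card_filter_le_of_coreSet_ssubset [Fintype V] {d : ℕ} {S : Finset V}
    (hS : coreSet G d ⊂ S) : ∃ v ∈ S, v ∉ coreSet G d ∧ (S.filter (G.Adj v)).card ≤ d := by
  by_contra! hcon
  refine hS.2 (subset_coreSet fun u hu => ?_)
  by_cases huc : u ∈ coreSet G d
  · exact (lt_card_filter_coreSet huc).trans_le
      (Finset.card_le_card (Finset.filter_subset_filter _ hS.1))
  · exact hcon u hu huc

open scoped Classical in
theorem sum_card_filter_insert {v : V} {T : Finset V} (hv : v ∉ T) :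
    ∑ u ∈ insert v T, ((insert v T).filter (G.Adj u)).card =
      ∑ u ∈ T, (T.filter (G.Adj u)).card + 2 * ((insert v T).filter (G.Adj v)).card := by
  have h1 : (insert v T).filter (G.Adj v) = T.filter (G.Adj v) := by
    rw [Finset.filter_insert, if_neg (G.loopless.irrefl v)]
  have h2 : ∀ u ∈ T, ((insert v T).filter (G.Adj u)).card =
      (T.filter (G.Adj u)).card + if G.Adj v u then 1 else 0 := by
    intro u _
    rw [Finset.filter_insert, G.adj_comm v u]
    split_ifs
    · rw [Finset.card_insert_of_notMem (by simp [hv])]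
    · rfl
  rw [Finset.sum_insert hv, Finset.sum_congr rfl h2, Finset.sum_add_distrib, h1,
    Finset.card_filter (G.Adj v) T]
  ring

open scoped Classical in
/-- Counting edges by removing vertices of degree at most `d` until `b` vertices are left. -/
theorem sum_card_filter_le {A : Finset V} {b d : ℕ}
    (hrem : ∀ S, A ⊆ S → b < S.card → ∃ v ∈ S, v ∉ A ∧ (S.filter (G.Adj v)).card ≤ d)
    {S : Finset V} (hA : A ⊆ S) (hb : b ≤ S.card) :
    ∑ u ∈ S, (S.filter (G.Adj u)).card ≤ b * (b - 1) + 2 * d * (S.card - b) := by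
  obtain ⟨N, hN⟩ := Nat.exists_eq_add_of_le hb
  induction N generalizing S with
  | zero =>
    have hdeg : ∀ u ∈ S, (S.filter (G.Adj u)).card ≤ b - 1 := by
      intro u hu
      have : S.filter (G.Adj u) ⊆ S.erase u := by
        intro w hw
        rw [Finset.mem_filter] at hw
        exact Finset.mem_erase.2 ⟨hw.2.ne', hw.1⟩
      have := Finset.card_le_card this
      rw [Finset.card_erase_of_mem hu] at this
      omega
    have := Finset.sum_le_card_nsmul S _ _ hdeg
    rw [hN] at this ⊢
    simpa using this
  | succ N ih =>
    obtain ⟨v, hvS, hvA, hv⟩ := hrem S hA (by omega)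
    have hcard := Finset.card_erase_of_mem hvS
    have := ih (S := S.erase v) (fun w hw => Finset.mem_erase.2 ⟨fun h => hvA (h ▸ hw), hA hw⟩)
      (by omega) (by omega)
    have hins := sum_card_filter_insert (G := G) (Finset.notMem_erase v S)
    rw [Finset.insert_erase hvS] at hins
    rw [hins]
    have e1 : (S.erase v).card - b = N := by omega
    have e2 : S.card - b = N + 1 := by omega
    rw [e1] at this
    rw [e2, mul_add]
    omega

open scoped Classical in
theorem two_mul_edgeCount [Fintype V] :
    2 * edgeCount G = ∑ u : V, ((Finset.univ : Finset V).filter (G.Adj u)).card := by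
  rw [edgeCount, ← SimpleGraph.coe_edgeFinset, Set.ncard_coe_finset,
    ← SimpleGraph.sum_degrees_eq_twice_card_edges]
  refine Finset.sum_congr rfl fun u _ => ?_
  rw [← SimpleGraph.card_neighborFinset_eq_degree]
  congr 1
  ext w
  simp

open scoped Classical in
theorem NoCutVertex.one_lt_card_filter [Fintype V] (hG : NoCutVertex G)
    (hV : 3 ≤ Fintype.card V) (u : V) :
    1 < ((Finset.univ : Finset V).filter (G.Adj u)).card := by
  have key : ∀ c, c ≠ u → ∃ w, w ≠ c ∧ G.Adj u w := by
    intro c hcu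
    have : ∃ t, t ∉ ({c, u} : Finset V) := by
      by_contra! hall
      have h1 : (Finset.univ : Finset V) ⊆ {c, u} := fun t _ => hall t
      have h2 := (Finset.card_le_card h1).trans Finset.card_le_two
      rw [Finset.card_univ] at h2
      omega
    obtain ⟨t, ht⟩ := this
    simp only [Finset.mem_insert, Finset.mem_singleton, not_or] at ht
    obtain ⟨l, hl, hc⟩ := hG c u t hcu.symm ht.1
    obtain ⟨w, l', hadj, hl', -, hmem⟩ := hl.exists_tail (Ne.symm ht.2)
    exact ⟨w, fun h => hc ((hmem c).2 (Or.inr (h ▸ hl'.mem_head))), hadj⟩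
  have : Nontrivial V := Fintype.one_lt_card_iff_nontrivial.1 (by omega)
  obtain ⟨c, hc⟩ := exists_ne u
  obtain ⟨w, -, hw⟩ := key c hc
  obtain ⟨w', hne, hw'⟩ := key w hw.ne'
  rw [Finset.one_lt_card]
  exact ⟨w, by simpa using hw, w', by simpa using hw', hne.symm⟩

theorem hasLongCycle_of_isClique {S : Finset V} (hS : ∀ x ∈ S, ∀ y ∈ S, x ≠ y → G.Adj x y)
    (h2 : 2 ≤ S.card) : HasLongCycle G S.card := by
  obtain ⟨x, t, hx⟩ := List.exists_cons_of_ne_nil (l := S.toList) (by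
    rw [Ne, Finset.toList_eq_nil]; rintro rfl; simp at h2)
  have hnd := S.nodup_toList
  have hlen : S.toList.length = S.card := S.length_toList
  have hmem : ∀ z ∈ S.toList, z ∈ S := fun z hz => Finset.mem_toList.1 hz
  rw [hx] at hnd hlen hmem
  have hne : x :: t ≠ [] := by simp
  have hchain : (x :: t).IsChain G.Adj := by
    rw [List.isChain_iff_getElem]
    intro i hi
    exact hS _ (hmem _ (List.getElem_mem _)) _ (hmem _ (List.getElem_mem _)) fun h => by
      have := hnd.getElem_inj_iff.1 h
      omega
  refine ⟨x, (x :: t).getLast hne, x :: t, ⟨hchain, hnd, rfl,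
    List.getLast?_eq_some_getLast hne⟩, ?_, hlen.ge⟩
  refine hS _ (hmem _ (List.getLast_mem _)) _ (hmem _ (by simp)) fun h => ?_
  have ht : t ≠ [] := by rintro rfl; simp at hlen; omega
  rw [List.getLast_cons ht] at h
  exact (List.nodup_cons.1 hnd).1 (h ▸ List.getLast_mem ht)

theorem two_mul_choose_two (a : ℕ) : 2 * a.choose 2 = a * (a - 1) := by
  rw [Nat.choose_two_right, Nat.mul_div_cancel' (Nat.even_mul_pred_self a).two_dvd]

theorem hFun_half {n k : ℕ} (hn : k ≤ n) :
    2 * hFun n k (k / 2) = k / 2 * (k / 2 - 1) + 2 * (k / 2) * (n - k / 2) := by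
  obtain ⟨s, hs⟩ : ∃ s, s = k / 2 := ⟨_, rfl⟩
  rw [hFun, mul_add, two_mul_choose_two, ← hs]
  obtain ⟨r, rfl⟩ := Nat.exists_eq_add_of_le hn
  rcases Nat.even_or_odd' k with ⟨t, rfl | rfl⟩
  · obtain rfl : s = t := by omega
    rw [show 2 * s - s = s by omega, show 2 * s + r - 2 * s + s = r + s by omega,
      show 2 * s + r - s = r + s by omega]
    ring
  · obtain rfl : s = t := by omega
    rw [show 2 * s + 1 - s = s + 1 by omega, show 2 * s + 1 + r - (2 * s + 1) + s = r + s by omega,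
      show 2 * s + 1 + r - s = r + s + 1 by omega]
    cases s with
    | zero => simp
    | succ s => simp only [Nat.add_sub_cancel]; ring

/-- `hFun n k` is convex. -/
theorem hFun_le_max {n k d : ℕ} (h2 : 2 ≤ d) (hd : d ≤ k / 2) :
    hFun n k d ≤ max (hFun n k (k / 2)) (hFun n k 2) := by
  obtain ⟨s, hs⟩ : ∃ s, s = k / 2 := ⟨_, rfl⟩
  have key : ∀ a : ℕ, a + 1 ≤ k → (2 * hFun n k a : ℤ) =
      (k - a) * (k - a - 1) + 2 * a * ((n - k : ℕ) + a) := by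
    intro a ha
    have h1 : 2 * hFun n k a = (k - a) * (k - a - 1) + 2 * (a * (n - k + a)) := by
      rw [hFun, mul_add, two_mul_choose_two]
    have h3 : (2 * hFun n k a : ℤ) = ((k - a : ℕ) : ℤ) * ((k - a - 1 : ℕ) : ℤ)
        + 2 * (a * ((n - k : ℕ) + a)) := by exact_mod_cast h1
    rw [h3]
    push_cast [Nat.cast_sub (show a ≤ k by omega), Nat.cast_sub (show 1 ≤ k - a by omega)]
    ring
  by_contra! hlt
  rw [max_lt_iff, ← hs] at hlt
  rw [← hs] at hd
  have e1 := key d (by omega)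
  have e2 := key s (by omega)
  have e3 := key 2 (by omega)
  have l1 : (hFun n k s : ℤ) < hFun n k d := by exact_mod_cast hlt.1
  have l2 : (hFun n k 2 : ℤ) < hFun n k d := by exact_mod_cast hlt.2
  have h2' : (2 : ℤ) ≤ d := by exact_mod_cast h2
  have hd' : (d : ℤ) ≤ s := by exact_mod_cast hd
  generalize ((n - k : ℕ) : ℤ) = r at *
  have m1 : 0 < ((d : ℤ) - 2) * (3 * (d + 2) + (1 - 2 * k + 2 * r)) := by push_cast at e3; nlinarith
  have m2 : 0 < ((s : ℤ) - d) * -(3 * (d + s) + (1 - 2 * k + 2 * r)) := by nlinarith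
  have p1 := pos_of_mul_pos_right m1 (by linarith)
  have p2 := pos_of_mul_pos_right m2 (by linarith)
  linarith

/-- Kopylov's theorem for saturated graphs. -/
theorem IsCycleSaturated.edgeCount_le [Fintype V] {k : ℕ} (hsat : IsCycleSaturated G k)
    (hk : 5 ≤ k) (hV : k ≤ Fintype.card V) (hG : NoCutVertex G) (hno : ¬ HasLongCycle G k) :
    edgeCount G ≤ max (hFun (Fintype.card V) k (k / 2)) (hFun (Fintype.card V) k 2) := by
  classical
  obtain ⟨n, hn⟩ : ∃ n, n = Fintype.card V := ⟨_, rfl⟩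
  rw [← hn] at hV ⊢
  have hcount : ∀ A : Finset V, ∀ b d, b ≤ n →
      (∀ S, A ⊆ S → b < S.card → ∃ v ∈ S, v ∉ A ∧ (S.filter (G.Adj v)).card ≤ d) →
      2 * edgeCount G ≤ b * (b - 1) + 2 * d * (n - b) := by
    intro A b d hb hrem
    have := sum_card_filter_le hrem (Finset.subset_univ A) (by rwa [Finset.card_univ, ← hn])
    rw [Finset.card_univ, ← hn] at this
    rw [two_mul_edgeCount]
    exact this
  set H := coreSet G (k / 2) with hH
  rcases H.eq_empty_or_nonempty with hempty | ⟨x₀, hx₀⟩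
  · refine le_max_of_le_left ?_
    have := hcount ∅ (k / 2) (k / 2) (by omega) (fun S _ hS => by
      obtain ⟨v, h1, -, h3⟩ := exists_card_filter_le_of_coreSet_ssubset (G := G) (d := k / 2)
        (S := S) (by
          rw [← hH, hempty, Finset.empty_ssubset, ← Finset.card_pos]; omega)
      exact ⟨v, h1, by simp, h3⟩)
    rw [← hFun_half hV] at this
    omega
  have hHdeg : ∀ x ∈ H, k / 2 + 1 ≤ (H.filter (G.Adj x)).card := fun x hx =>
    lt_card_filter_coreSet hx
  have hclique : ∀ x ∈ H, ∀ y ∈ H, x ≠ y → G.Adj x y := fun x hx y hy hxy =>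
    hsat.adj_of_degrees (by omega) hG hno hHdeg hHdeg (by omega) hx hy hxy
  have hHfilter : ∀ x, (∀ y ∈ H, x ≠ y → G.Adj x y) → H.filter (G.Adj x) = H.erase x := by
    intro x hx
    ext y
    rw [Finset.mem_filter, Finset.mem_erase]
    exact ⟨fun h => ⟨h.2.ne', h.1⟩, fun h => ⟨h.2, hx y h.2 h.1.symm⟩⟩
  have hHcard : ∀ x ∈ H, (H.filter (G.Adj x)).card = H.card - 1 := fun x hx => by
    rw [hHfilter x (hclique x hx), Finset.card_erase_of_mem hx]
  have hHlarge : k / 2 + 2 ≤ H.card := by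
    have h1 := hHdeg x₀ hx₀
    rw [hHcard x₀ hx₀] at h1
    omega
  have hHsmall : H.card < k := by
    by_contra! hle
    obtain ⟨u, v, l, hl, hadj, hlen⟩ := hasLongCycle_of_isClique hclique (by omega)
    exact hno ⟨u, v, l, hl, hadj, hle.trans hlen⟩
  obtain ⟨d, hd⟩ : ∃ d, d = k - H.card := ⟨_, rfl⟩
  have hsub : H ⊆ coreSet G d := coreSet_anti (by omega)
  have hcore : coreSet G d = H := by
    refine Finset.Subset.antisymm (fun x hx => ?_) hsub
    by_contra hxH
    have hxadj : ∀ y ∈ H, x ≠ y → G.Adj x y := fun y hy hxy =>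
      hsat.adj_of_degrees (by omega) hG hno (c := d + 1) (d := H.card - 1)
        (fun x hx => lt_card_filter_coreSet hx) (fun y hy => (hHcard y hy).ge) (by omega) hx hy hxy
    have hins : insert x H ⊆ H := subset_coreSet fun u hu => by
      have hle : (H.filter (G.Adj u)).card ≤ ((insert x H).filter (G.Adj u)).card :=
        Finset.card_le_card (Finset.filter_subset_filter _ (Finset.subset_insert _ _))
      rcases Finset.mem_insert.1 hu with rfl | hu
      · rw [hHfilter u hxadj, Finset.erase_eq_of_notMem hxH] at hle
        omega
      · exact (hHdeg u hu).trans hle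
    exact hxH (hins (Finset.mem_insert_self _ _))
  have hd2 : 2 ≤ d := by
    by_contra! hlt
    have huniv : Finset.univ ⊆ coreSet G d := subset_coreSet fun u _ => by
      have := hG.one_lt_card_filter (by omega) u
      omega
    have := Finset.card_le_card (hcore ▸ huniv)
    rw [Finset.card_univ, ← hn] at this
    omega
  refine le_trans ?_ (hFun_le_max (n := n) hd2 (by omega))
  have h1 := hcount H H.card d (by omega) (fun S hHS hS => by
    obtain ⟨v, h1, h2, h3⟩ := exists_card_filter_le_of_coreSet_ssubset (G := G) (d := d)
      (S := S) (by
        rw [hcore]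
        exact Finset.ssubset_iff_subset_ne.2 ⟨hHS, fun h => by rw [h] at hS; omega⟩)
    exact ⟨v, h1, hcore ▸ h2, h3⟩)
  have h2 : 2 * hFun n k d = H.card * (H.card - 1) + 2 * d * (n - H.card) := by
    rw [hFun, mul_add, two_mul_choose_two, show k - d = H.card by omega,
      show n - k + d = n - H.card by omega]
    ring
  omega

end Kopylov

/-- Kopylov. Let `k ≥ 5` and `G` be a 2-connected graph on `n ≥ k`
vertices. If `e(G) > max{h(n,k,⌊k/2⌋), h(n,k,2)}`, then `G` contains a cycle of
length at least `k`. -/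
theorem kopylov (k n : ℕ) (hk : 5 ≤ k) (hn : k ≤ n) (G : SimpleGraph (Fin n))
    (h2c : TwoConnected G)
    (he : max (hFun n k (k / 2)) (hFun n k 2) < edgeCount G) :
    ∃ (v : Fin n) (c : G.Walk v v), c.IsCycle ∧ k ≤ c.length := by
  by_contra hcon
  have hno : ¬ HasLongCycle G k := fun h => hcon (h.exists_isCycle (by omega))
  obtain ⟨H, hGH, hH⟩ :=
    (Set.toFinite {H : SimpleGraph (Fin n) | ¬ HasLongCycle H k}).exists_le_maximal hno
  have hle := (isCycleSaturated_of_maximal (by omega) hH).edgeCount_le hk (by simpa using hn)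
    (h2c.noCutVertex.mono hGH) hH.1
  rw [Fintype.card_fin] at hle
  have hmono : edgeCount G ≤ edgeCount H :=
    Set.ncard_le_ncard (SimpleGraph.edgeSet_mono hGH) (Set.toFinite _)
  omega
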